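/- Funnel implies robustness bounds. Let h : ℝ^p → ℝ, let y : [0,∞) → ℝ^p, let 0 ≤ a ≤ b, let r, ρ^max ∈ ℝ, let γ : [0,∞) → (0,∞), and let t* ≥ 0. Assume the funnel inequality −γ(t) + ρ^max < h(y(t)) < ρ^max holds for all t ≥ 0 and that −γ(t) + ρ^max ≥ r for all t ≥ t*. Then: (i) if t* = a, then r ≤ inf_{t∈[a,b]} h(y(t)) ≤ ρ^max (always-type robustness bound); (ii) if t* ∈ [a,b], then r ≤ sup_{t∈[a,b]} h(y(t)) ≤ ρ^max (eventually-type robustness bound). -/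

import Mathlib

/-!
On `[a, b]` the values `h (y t)` lie below `ρmax`, and for `t ≥ tstar` the funnel together with
`r ≤ -γ t + ρmax` puts them above `r`. When `tstar = a` both bounds hold on the whole window, hence
for the infimum; when `tstar ∈ [a, b]` the lower bound at the single time `tstar` suffices for the
supremum. Nonemptiness and boundedness of the image make the real `sInf` and `sSup` genuine.
-/

/-- funnel implies robustness bounds: if the funnel inequality
`−γ(t) + ρ^max < h(y(t)) < ρ^max` holds for all `t ≥ 0` and `−γ(t) + ρ^max ≥ r` for all
`t ≥ t*`, then: (i) if `t* = a`, the always-type robustness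
`inf_{t∈[a,b]} h(y(t))` satisfies `r ≤ inf ≤ ρ^max`; (ii) if `t* ∈ [a,b]`, the
eventually-type robustness `sup_{t∈[a,b]} h(y(t))` satisfies `r ≤ sup ≤ ρ^max`. -/
theorem funnel_implies_robustness (p : ℕ) (h : (Fin p → ℝ) → ℝ) (y : ℝ → Fin p → ℝ)
    (a b r ρmax tstar : ℝ) (γ : ℝ → ℝ)
    (ha : 0 ≤ a) (hab : a ≤ b) (htstar : 0 ≤ tstar)
    (hγpos : ∀ t ≥ (0 : ℝ), 0 < γ t)
    (hfunnel : ∀ t ≥ (0 : ℝ), -γ t + ρmax < h (y t) ∧ h (y t) < ρmax)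
    (hlow : ∀ t ≥ tstar, r ≤ -γ t + ρmax) :
    (tstar = a →
      r ≤ sInf ((fun t => h (y t)) '' Set.Icc a b) ∧
      sInf ((fun t => h (y t)) '' Set.Icc a b) ≤ ρmax) ∧
    (tstar ∈ Set.Icc a b →
      r ≤ sSup ((fun t => h (y t)) '' Set.Icc a b) ∧
      sSup ((fun t => h (y t)) '' Set.Icc a b) ≤ ρmax) := by
  have hne : ((fun t => h (y t)) '' Set.Icc a b).Nonempty :=
    (Set.nonempty_Icc.2 hab).image _
  have hub : ∀ x ∈ (fun t => h (y t)) '' Set.Icc a b, x ≤ ρmax := by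
    rintro _ ⟨t, ht, rfl⟩
    exact (hfunnel t (ha.trans ht.1)).2.le
  have hlb : ∀ t ≥ tstar, r ≤ h (y t) := fun t ht =>
    (hlow t ht).trans (hfunnel t (htstar.trans ht)).1.le
  refine ⟨fun hta => ?_, fun hmem => ⟨?_, csSup_le hne hub⟩⟩
  · have hrb : ∀ x ∈ (fun t => h (y t)) '' Set.Icc a b, r ≤ x := by
      rintro _ ⟨t, ht, rfl⟩
      exact hlb t (hta.le.trans ht.1)
    obtain ⟨x, hx⟩ := hne
    exact ⟨le_csInf ⟨x, hx⟩ hrb, (csInf_le ⟨r, hrb⟩ hx).trans (hub x hx)⟩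
  · -- The supremum dominates the value at `tstar`, where `r` is already a lower bound.
    exact (hlb tstar le_rfl).trans (le_csSup ⟨ρmax, hub⟩ ⟨tstar, hmem, rfl⟩)
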